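/- arXiv:1701.08012 — 2 statements merged into one kernel-verified Lean document; each statement's English description precedes it below -/
import Mathlib

section
/- Let m ≥ 1 be an integer, H₀ ∈ (1 − 1/(2m), 1), and set H = 1 + m(H₀ − 1) ∈ (1/2, 1). Let L : (0,∞) → (0,∞) be slowly varying at infinity and bounded away from 0 and +∞ on every compact subset of (0,∞). Let K > 0 and let γ : ℝ → ℝ be a measurable even function with |γ(x)| ≤ K for all x and |γ(x)| ≤ K · L(|x|)^{2m} · |x|^{−2(1−H)} for all x ≠ 0. Then for every ζ ∈ (0, 1), sup over ε ∈ (0, ζ) of [ε^{2(1−H)} L(1/ε)^{2m}]^{−1} · ∫₀¹∫₀¹ |γ((y−ξ)/ε)| dy dξ is finite. -/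
/-!
With `α = 2(1 - H) ∈ (0, 1)` and `u = 1/ε`, the substitution `s = (y - ξ)/ε` and evenness bound the
double integral by `2ε ∫₀ᵘ |γ|` (`inner_integral_le`), so it suffices that
`∫₀ᵘ |γ| ≤ C u^{1-α} L(u)^{2m}` for `u ≥ 1/ζ` (`integral_abs_le`). This is the direct half of
Karamata's theorem: in the logarithmic variable, `Φ x = L(e^x)^{2m}` satisfies
`Φ (x + a) / Φ x → 1`, and with `β = 1 - α > 0` the integral of `Φ t e^{βt}` over the unit windows
to the left of `x` decays geometrically (`karamata_bound`).

The delicate point is that `L` is not assumed measurable, so the uniform convergence theorem for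
slowly varying functions is not available. What is needed is only that the lower integral of `Φ`
over `[x - 1, x]` is at most `16 Φ x` for large `x` (`lower_avg_le`); it suffices because
the measurable function `|γ|` is a minorant, up to a constant, of `u ↦ L(u)^{2m} u^{-α}`. To prove
it, take the set of shifts `a ∈ [-2, 2]` for which `Φ (y + a) ≤ 2 Φ y` for all `y ≥ N`. For `N` large
it has almost full outer measure. Hence a maximal measurable minorant `f` of `Φ` is at most
`2 Φ x` on most of the window, and its integral over most translates of that good part is at most
`4 Φ x`. Averaging over the translates, by Tonelli, controls `f` on the whole window.
-/

open MeasureTheory Filter Topology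

/-! ### Uniform convergence for lower integrals -/

/-- Averaged upper half of the uniform convergence theorem, without measurability of `Φ`.
The integral `∫⁻` of a non-measurable function is its lower integral, attained on every set by one
measurable minorant `f` of `t ↦ Φ (x + t)`; since `f` is maximal, the inequality
`Φ (y + a) ≤ 2 Φ y` passes to integrals of `f`. -/
lemma lower_avg_le (Φ : ℝ → ENNReal)
    (h : ∀ a : ℝ, ∃ N : ℝ, ∀ x ≥ N, Φ (x + a) ≤ 2 * Φ x) :
    ∃ N : ℝ, ∀ x ≥ N, ∫⁻ t in Set.Icc (-1:ℝ) 0, Φ (x + t) ≤ 16 * Φ x := by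
  -- `T N` is possibly non-measurable, but outer measure is still continuous along increasing unions
  let T : ℕ → Set ℝ := fun N => {a ∈ Set.Icc (-2:ℝ) 2 | ∀ x ≥ (N:ℝ), Φ (x + a) ≤ 2 * Φ x}
  have hTmono : Monotone T := fun N M hNM a ha =>
    ⟨ha.1, fun x hx => ha.2 x (le_trans (by exact_mod_cast hNM) hx)⟩
  have hTU : ⋃ N, T N = Set.Icc (-2:ℝ) 2 := by
    ext a
    simp only [Set.mem_iUnion]
    refine ⟨fun ⟨N, hN⟩ => hN.1, fun ha => ?_⟩
    obtain ⟨N, hN⟩ := h a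
    obtain ⟨n, hn⟩ := exists_nat_ge N
    exact ⟨n, ha, fun x hx => hN x (le_trans hn hx)⟩
  have hlim := tendsto_measure_iUnion_atTop (μ := (volume : Measure ℝ)) hTmono
  rw [hTU, Real.volume_Icc] at hlim
  have hlt : ENNReal.ofReal (15/4) < ENNReal.ofReal (2 - (-2)) := by
    rw [ENNReal.ofReal_lt_ofReal_iff] <;> norm_num
  obtain ⟨N, hN⟩ := (hlim.eventually (lt_mem_nhds hlt)).exists
  simp only [Function.comp] at hN
  -- a measurable set containing `T N ∩ [c, d]` misses at most measure `1/4` of `[c, d]`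
  have key : ∀ c d : ℝ, -2 ≤ c → c ≤ d → d ≤ 2 → ∀ A : Set ℝ, MeasurableSet A →
      T N ∩ Set.Icc c d ⊆ A → volume (Set.Icc c d \ A) ≤ ENNReal.ofReal (1/4) := by
    intro c d hc hcd hd A hA hsub
    have h1 : T N ⊆ Set.Icc (-2) 2 \ (Set.Icc c d \ A) := by
      intro a ha
      refine ⟨ha.1, fun hh => hh.2 (hsub ⟨ha, hh.1⟩)⟩
    have hss : Set.Icc c d \ A ⊆ Set.Icc (-2) 2 :=
      Set.sdiff_subset.trans (Set.Icc_subset_Icc hc hd)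
    have h2 := measure_mono (μ := (volume : Measure ℝ)) h1
    have hfin : volume (Set.Icc c d \ A) ≠ ⊤ :=
      ne_top_of_le_ne_top (by simp) (measure_mono (μ := (volume : Measure ℝ)) hss)
    rw [measure_sdiff hss (measurableSet_Icc.diff hA).nullMeasurableSet hfin,
      Real.volume_Icc] at h2
    have h3 := hN.le.trans h2
    lift volume (Set.Icc c d \ A) to NNReal using hfin with v
    rw [← ENNReal.ofReal_coe_nnreal, ← ENNReal.ofReal_sub _ v.coe_nonneg] at h3
    rw [← ENNReal.ofReal_coe_nnreal]
    apply ENNReal.ofReal_le_ofReal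
    by_contra! hv
    rw [ENNReal.ofReal_le_ofReal_iff'] at h3
    rcases h3 with h3 | h3 <;> linarith
  refine ⟨N + 1, fun x hx => ?_⟩
  obtain ⟨f, hfm, hfle, hfint⟩ :=
    exists_measurable_le_forall_setLIntegral_eq volume (fun t => Φ (x + t))
  -- `f` is small on most of `[-1, 0]`
  let E : Set ℝ := Set.Icc (-1) 0 ∩ {t | f t ≤ 2 * Φ x}
  have hE' : MeasurableSet {t | f t ≤ 2 * Φ x} := measurableSet_le hfm measurable_const
  have hE : MeasurableSet E := measurableSet_Icc.inter hE'
  have hEmeas : volume (Set.Icc (-1:ℝ) 0 \ E) ≤ ENNReal.ofReal (1/4) := by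
    refine key _ _ (by norm_num) (by norm_num) (by norm_num) E hE ?_
    intro a ha
    exact ⟨ha.2, (hfle a).trans (ha.1.2 x (by linarith))⟩
  -- for most shifts `a`, the integral of `f` over `E + a` is still small
  let w : ℝ → ENNReal := fun a => ∫⁻ t in E, f (a + t)
  have hw : Measurable w := by
    have : Measurable (fun p : ℝ × ℝ => f (p.1 + p.2)) := hfm.comp (by fun_prop)
    exact this.lintegral_prod_right'
  let A : Set ℝ := Set.Icc (-1) 1 ∩ {a | w a ≤ 4 * Φ x}
  have hA : MeasurableSet A := measurableSet_Icc.inter (measurableSet_le hw measurable_const)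
  have hEvol : volume E ≤ 1 := by
    refine (measure_mono Set.inter_subset_left).trans ?_
    simp
  have hAvol : volume A ≤ 2 := by
    refine (measure_mono Set.inter_subset_left).trans ?_
    rw [Real.volume_Icc]; norm_num
  have hAmeas : volume (Set.Icc (-1:ℝ) 1 \ A) ≤ ENNReal.ofReal (1/4) := by
    refine key _ _ (by norm_num) (by norm_num) (by norm_num) A hA ?_
    intro a ha
    refine ⟨ha.2, ?_⟩
    calc w a ≤ ∫⁻ t in E, 2 * Φ (x + t) := by
          refine setLIntegral_mono' hE fun t ht => ?_
          refine (hfle _).trans ?_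
          have := ha.1.2 (x + t) (by linarith [ht.1.1])
          simpa [add_assoc, add_comm a t] using this
      _ = 2 * ∫⁻ t in E, f t := by
          rw [lintegral_const_mul' _ _ (by norm_num), hfint E]
      _ ≤ 2 * ∫⁻ t in E, 2 * Φ x := by
          gcongr 2 * ?_
          exact setLIntegral_mono' hE fun t ht => ht.2
      _ ≤ 2 * (2 * Φ x * 1) := by
          rw [setLIntegral_const]; gcongr
      _ = 4 * Φ x := by rw [mul_one, ← mul_assoc]; norm_num
  -- integrate over all shifts `a = s - t ∈ A`: every `s ∈ [-1, 0]` lies in `E + a` for a set of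
  -- shifts of measure at least `1/2`, so the average over `A` controls `∫ f` on all of `[-1, 0]`
  let G : ℝ → ℝ → ENNReal := fun t s => E.indicator 1 t * A.indicator 1 (s - t) * f s
  have hiE : Measurable (E.indicator (1 : ℝ → ENNReal)) := measurable_one.indicator hE
  have hiA : Measurable (A.indicator (1 : ℝ → ENNReal)) := measurable_one.indicator hA
  have hG : Measurable (Function.uncurry G) := by
    refine ((hiE.comp measurable_fst).mul
      (hiA.comp (measurable_snd.sub measurable_fst))).mul (hfm.comp measurable_snd)
  have hG' : Measurable (Function.uncurry fun t a => G t (a + t)) :=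
    hG.comp (measurable_fst.prodMk (measurable_snd.add measurable_fst))
  have hup : ∫⁻ t, ∫⁻ s, G t s ≤ 8 * Φ x := by
    calc ∫⁻ t, ∫⁻ s, G t s = ∫⁻ t, ∫⁻ a, G t (a + t) := by
          refine lintegral_congr fun t => ?_
          exact (lintegral_add_right_eq_self (G t) t).symm
      _ = ∫⁻ a, ∫⁻ t, G t (a + t) := lintegral_lintegral_swap hG'.aemeasurable
      _ ≤ ∫⁻ a, A.indicator (fun _ => 4 * Φ x) a := by
          refine lintegral_mono fun a => ?_
          by_cases ha : a ∈ A
          · simp only [G, add_sub_cancel_right, Set.indicator_of_mem ha, Pi.one_apply, mul_one]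
            refine le_trans (le_of_eq ?_) ha.2
            change _ = ∫⁻ t in E, f (a + t)
            rw [← lintegral_indicator hE]
            refine lintegral_congr fun t => ?_
            by_cases ht : t ∈ E <;> simp [ht]
          · simp [G, ha]
      _ ≤ 4 * Φ x * 2 := by
          rw [lintegral_indicator hA, setLIntegral_const]; gcongr
      _ = 8 * Φ x := by rw [mul_right_comm]; norm_num
  have hlow : (∫⁻ s in Set.Icc (-1:ℝ) 0, f s) * ENNReal.ofReal (1/2) ≤ ∫⁻ t, ∫⁻ s, G t s := by
    rw [lintegral_lintegral_swap hG.aemeasurable, ← lintegral_mul_const _ hfm,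
      ← lintegral_indicator measurableSet_Icc]
    refine lintegral_mono fun s => ?_
    by_cases hs : s ∈ Set.Icc (-1:ℝ) 0
    swap
    · simp [hs]
    rw [Set.indicator_of_mem hs]
    have hpre : MeasurableSet ((fun t => s - t) ⁻¹' A) := hA.preimage (by fun_prop)
    have hval : ∫⁻ t, G t s = volume (E ∩ (fun t => s - t) ⁻¹' A) * f s := by
      rw [← lintegral_indicator_one (hE.inter hpre), ← lintegral_mul_const]
      · refine lintegral_congr fun t => ?_
        simp only [G, Set.inter_indicator_one, Pi.mul_apply]
        rfl
      · exact measurable_one.indicator (hE.inter hpre)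
    rw [hval, mul_comm]
    gcongr
    have hcov : Set.Icc (-1:ℝ) 0 ⊆ (E ∩ (fun t => s - t) ⁻¹' A) ∪
        ((Set.Icc (-1:ℝ) 0 \ E) ∪ (fun t => s - t) ⁻¹' (Set.Icc (-1:ℝ) 1 \ A)) := by
      intro t ht
      by_cases h1 : t ∈ E
      · by_cases h2 : s - t ∈ A
        · exact Or.inl ⟨h1, h2⟩
        · refine Or.inr (Or.inr ⟨⟨?_, ?_⟩, h2⟩)
          · linarith [hs.1, ht.2]
          · linarith [hs.2, ht.1]
      · exact Or.inr (Or.inl ⟨ht, h1⟩)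
    have hmp : volume ((fun t => s - t) ⁻¹' (Set.Icc (-1:ℝ) 1 \ A))
        = volume (Set.Icc (-1:ℝ) 1 \ A) :=
      (Measure.measurePreserving_sub_left volume s).measure_preimage
        (measurableSet_Icc.diff hA).nullMeasurableSet
    have h1 : (1 : ENNReal) ≤ volume (E ∩ (fun t => s - t) ⁻¹' A) + ENNReal.ofReal (1/2) := by
      calc (1 : ENNReal) = volume (Set.Icc (-1:ℝ) 0) := by simp
        _ ≤ _ := measure_mono hcov
        _ ≤ volume (E ∩ (fun t => s - t) ⁻¹' A) +
            (volume (Set.Icc (-1:ℝ) 0 \ E) + volume (Set.Icc (-1:ℝ) 1 \ A)) := by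
          refine (measure_union_le _ _).trans ?_
          gcongr
          refine (measure_union_le _ _).trans ?_
          rw [hmp]
        _ ≤ volume (E ∩ (fun t => s - t) ⁻¹' A) +
            (ENNReal.ofReal (1/4) + ENNReal.ofReal (1/4)) := by gcongr
        _ = _ := by rw [← ENNReal.ofReal_add] <;> norm_num
    have h2 : (1 : ENNReal) = ENNReal.ofReal (1/2) + ENNReal.ofReal (1/2) := by
      rw [← ENNReal.ofReal_add] <;> norm_num
    rw [h2] at h1
    exact (ENNReal.add_le_add_iff_right (by simp)).1 h1
  rw [hfint]
  have h3 := hlow.trans hup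
  calc ∫⁻ s in Set.Icc (-1:ℝ) 0, f s
      = (∫⁻ s in Set.Icc (-1:ℝ) 0, f s) * ENNReal.ofReal (1/2) * 2 := by
        rw [mul_assoc, show (2:ENNReal) = ENNReal.ofReal 2 by simp, ← ENNReal.ofReal_mul] <;>
          norm_num
    _ ≤ 8 * Φ x * 2 := by gcongr
    _ = 16 * Φ x := by rw [mul_right_comm]; norm_num

/-! ### Karamata's theorem in logarithmic scale -/

lemma lintegral_unit_window_le (Φ : ℝ → ℝ) (hpos : ∀ x, 0 < Φ x)
    (hSV : ∀ a : ℝ, Tendsto (fun x => Φ (x + a) / Φ x) atTop (𝓝 1)) {β : ℝ} (hβ : 0 < β) :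
    ∃ N : ℝ, ∀ x ≥ N, ∫⁻ t in Set.Icc (x - 1) x, ENNReal.ofReal (Φ t * Real.exp (β * t)) ≤
      ENNReal.ofReal (16 * (Φ x * Real.exp (β * x))) := by
  obtain ⟨N, hN⟩ := lower_avg_le (fun x => ENNReal.ofReal (Φ x)) (by
    intro a
    obtain ⟨N, hN⟩ := eventually_atTop.1 ((hSV a).eventually (gt_mem_nhds one_lt_two))
    refine ⟨N, fun x hx => ?_⟩
    have := (div_lt_iff₀ (hpos x)).1 (hN x hx)
    rw [show (2:ENNReal) = ENNReal.ofReal 2 by simp, ← ENNReal.ofReal_mul (by norm_num)]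
    exact ENNReal.ofReal_le_ofReal this.le)
  refine ⟨N, fun x hx => ?_⟩
  calc ∫⁻ t in Set.Icc (x - 1) x, ENNReal.ofReal (Φ t * Real.exp (β * t))
      ≤ ∫⁻ t in Set.Icc (x - 1) x, ENNReal.ofReal (Real.exp (β * x)) * ENNReal.ofReal (Φ t) := by
        refine setLIntegral_mono' measurableSet_Icc fun t ht => ?_
        rw [← ENNReal.ofReal_mul (Real.exp_pos _).le, mul_comm]
        apply ENNReal.ofReal_le_ofReal
        have := (hpos t).le
        gcongr
        exact ht.2
    _ = ENNReal.ofReal (Real.exp (β * x)) *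
          ∫⁻ t in Set.Icc (x - 1) x, ENNReal.ofReal (Φ t) :=
        lintegral_const_mul' _ _ ENNReal.ofReal_ne_top
    _ = ENNReal.ofReal (Real.exp (β * x)) *
          ∫⁻ t in Set.Icc (-1:ℝ) 0, ENNReal.ofReal (Φ (x + t)) := by
        congr 1
        rw [← lintegral_indicator measurableSet_Icc, ← lintegral_indicator measurableSet_Icc,
          ← lintegral_add_left_eq_self _ x]
        refine lintegral_congr fun t => ?_
        have : x + t ∈ Set.Icc (x - 1) x ↔ t ∈ Set.Icc (-1:ℝ) 0 := by
          simp only [Set.mem_Icc]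
          constructor <;> rintro ⟨h1, h2⟩ <;> constructor <;> linarith
        by_cases ht : t ∈ Set.Icc (-1:ℝ) 0
        · rw [Set.indicator_of_mem ht, Set.indicator_of_mem (this.2 ht)]
        · rw [Set.indicator_of_notMem ht, Set.indicator_of_notMem (fun h => ht (this.1 h))]
    _ ≤ ENNReal.ofReal (Real.exp (β * x)) * (16 * ENNReal.ofReal (Φ x)) := by
        gcongr
        exact hN x hx
    _ = _ := by
        rw [show (16:ENNReal) = ENNReal.ofReal 16 by simp, ← ENNReal.ofReal_mul (by norm_num),
          ← ENNReal.ofReal_mul (Real.exp_pos _).le]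
        congr 1; ring

/-- Upper half of Karamata's theorem in logarithmic scale: the lower integral of `Φ t * e^{βt}`
is dominated by the value of the integrand at the right endpoint. The last clause records that this
integrand does not decrease under unit steps. -/
lemma karamata_bound (Φ : ℝ → ℝ) (hpos : ∀ x, 0 < Φ x)
    (hSV : ∀ a : ℝ, Tendsto (fun x => Φ (x + a) / Φ x) atTop (𝓝 1)) {β : ℝ} (hβ : 0 < β) :
    ∃ X C : ℝ, 0 ≤ C ∧
      (∀ x ≥ X, ∫⁻ t in Set.Icc X x, ENNReal.ofReal (Φ t * Real.exp (β * t)) ≤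
        ENNReal.ofReal (C * (Φ x * Real.exp (β * x)))) ∧
      (∀ x ≥ X, Φ x * Real.exp (β * x) ≤ Φ (x + 1) * Real.exp (β * (x + 1))) := by
  obtain ⟨N, hN⟩ := lintegral_unit_window_le Φ hpos hSV hβ
  have hq1 : Real.exp (-(β/2)) < 1 := by rw [Real.exp_lt_one_iff]; linarith
  -- a factor `e^{-β/2}` per unit step is what remains of `e^{-β}` after the slow variation of `Φ`
  obtain ⟨M, hM⟩ := eventually_atTop.1 ((hSV 1).eventually (lt_mem_nhds hq1))
  set q := Real.exp (-(β/2)) with hq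
  have hq0 : 0 < q := Real.exp_pos _
  set Ψ : ℝ → ℝ := fun x => Φ x * Real.exp (β * x) with hΨ
  have hΨpos : ∀ x, 0 < Ψ x := fun x => mul_pos (hpos x) (Real.exp_pos _)
  have hstep : ∀ x ≥ M, Ψ x ≤ q * Ψ (x + 1) := by
    intro x hx
    have h1 := (lt_div_iff₀ (hpos x)).1 (hM x hx)
    have h2 : q * q * Real.exp (β * (x + 1)) = Real.exp (β * x) := by
      rw [hq, ← Real.exp_add, ← Real.exp_add]; congr 1; ring
    calc Ψ x = q * (q * Φ x) * Real.exp (β * (x + 1)) := by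
          simp only [hΨ]; rw [← h2]; ring
      _ ≤ q * Φ (x + 1) * Real.exp (β * (x + 1)) := by gcongr
      _ = q * Ψ (x + 1) := by simp only [hΨ]; ring
  -- the constant is the sum of the geometric series `16 (1 + q + q² + ⋯)`
  refine ⟨max N M, 16 / (1 - q), div_nonneg (by norm_num) (by linarith), ?_, ?_⟩
  · set X := max N M with hX
    have hind : ∀ n : ℕ, ∀ x ≥ X, x ≤ X + n → ∫⁻ t in Set.Icc X x, ENNReal.ofReal (Ψ t) ≤
        ENNReal.ofReal (16 / (1 - q) * Ψ x) := by
      intro n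
      induction n with
      | zero =>
        intro x hx hx'
        have : x = X := le_antisymm (by simpa using hx') hx
        simp [this]
      | succ n ih =>
        intro x hx hx'
        have hu := hN x (le_trans (le_max_left _ _) hx)
        by_cases hc : x ≤ X + 1
        · refine (lintegral_mono_set (Set.Icc_subset_Icc_left (by linarith))).trans
            (hu.trans (ENNReal.ofReal_le_ofReal ?_))
          have : (16:ℝ) ≤ 16 / (1 - q) := by
            rw [le_div_iff₀ (by linarith)]; linarith
          exact mul_le_mul_of_nonneg_right this (hΨpos x).le
        · push Not at hc
          have ih' := ih (x - 1) (by linarith) (by push_cast at hx'; linarith)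
          have hs := hstep (x - 1) (by linarith [le_max_right N M])
          rw [sub_add_cancel] at hs
          have hcov : Set.Icc X x ⊆ Set.Icc X (x - 1) ∪ Set.Icc (x - 1) x := by
            intro t ht
            rcases le_total t (x - 1) with h | h
            · exact Or.inl ⟨ht.1, h⟩
            · exact Or.inr ⟨h, ht.2⟩
          calc ∫⁻ t in Set.Icc X x, ENNReal.ofReal (Ψ t)
              ≤ _ := lintegral_mono_set hcov
            _ ≤ _ := lintegral_union_le _ _ _
            _ ≤ ENNReal.ofReal (16 / (1 - q) * Ψ (x - 1)) + ENNReal.ofReal (16 * Ψ x) :=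
                add_le_add ih' hu
            _ = ENNReal.ofReal (16 / (1 - q) * Ψ (x - 1) + 16 * Ψ x) := by
                rw [ENNReal.ofReal_add]
                · exact mul_nonneg (div_nonneg (by norm_num) (by linarith)) (hΨpos _).le
                · exact mul_nonneg (by norm_num) (hΨpos _).le
            _ ≤ _ := by
                apply ENNReal.ofReal_le_ofReal
                have h0 : 0 ≤ 16 / (1 - q) := div_nonneg (by norm_num) (by linarith)
                calc 16 / (1 - q) * Ψ (x - 1) + 16 * Ψ x
                    ≤ 16 / (1 - q) * (q * Ψ x) + 16 * Ψ x := by gcongr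
                  _ = 16 / (1 - q) * Ψ x := by
                    have : 1 - q ≠ 0 := by linarith
                    field_simp; ring
    intro x hx
    obtain ⟨n, hn⟩ := exists_nat_ge (x - X)
    exact hind n x hx (by linarith)
  · intro x hx
    have h1 := hstep x (le_trans (le_max_right _ _) hx)
    have h2 := hΨpos (x + 1)
    change Ψ x ≤ Ψ (x + 1)
    nlinarith

lemma lower_bound_of_step (Ψ : ℝ → ℝ) (X c : ℝ)
    (hstep : ∀ x ≥ X, Ψ x ≤ Ψ (x + 1)) (hc : ∀ x ∈ Set.Icc X (X + 1), c ≤ Ψ x) :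
    ∀ x ≥ X, c ≤ Ψ x := by
  have hind : ∀ n : ℕ, ∀ x ≥ X, x ≤ X + n → c ≤ Ψ x := by
    intro n
    induction n with
    | zero => exact fun x hx hx' => hc x ⟨hx, by simp at hx'; linarith⟩
    | succ n ih =>
      intro x hx hx'
      by_cases h : x ≤ X + 1
      · exact hc x ⟨hx, h⟩
      · push Not at h
        have h1 := ih (x - 1) (by linarith) (by push_cast at hx'; linarith)
        have h2 := hstep (x - 1) (by linarith)
        rw [sub_add_cancel] at h2
        exact h1.trans h2
  intro x hx
  obtain ⟨n, hn⟩ := exists_nat_ge (x - X)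
  exact hind n x hx (by linarith)

/-! ### The mean-value estimate for the covariance -/

/-- The mean-value estimate `∫₀ᵘ |γ| ≤ C u^{1-α} L(u)ⁿ`, uniform for `u` away from `0`. The part of
the integral near `0` is bounded by a constant, which is absorbed because `u^{1-α} L(u)ⁿ` is bounded
below. -/
lemma integral_abs_le (L : ℝ → ℝ) (hLpos : ∀ x > 0, 0 < L x)
    (hSV : ∀ a > 0, Tendsto (fun u => L (a * u) / L u) atTop (𝓝 1))
    (hB : ∀ K : Set ℝ, K ⊆ Set.Ioi 0 → IsCompact K →
      ∃ c c' : ℝ, 0 < c ∧ c ≤ c' ∧ ∀ u ∈ K, c ≤ L u ∧ L u ≤ c')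
    (n : ℕ) {α : ℝ} (hα : α < 1) {K : ℝ} (hK : 0 < K) (γ : ℝ → ℝ) (hγm : Measurable γ)
    (hγb : ∀ x, |γ x| ≤ K) (hγd : ∀ x : ℝ, x ≠ 0 → |γ x| ≤ K * L |x| ^ n * |x| ^ (-α))
    {u₀ : ℝ} (hu₀ : 0 < u₀) :
    ∃ C : ℝ, ∀ u ≥ u₀, ∫ s in (0:ℝ)..u, |γ s| ≤ C * (u ^ (1 - α) * L u ^ n) := by
  set β := 1 - α with hβdef
  have hβ : 0 < β := by linarith
  set Φ : ℝ → ℝ := fun x => L (Real.exp x) ^ n with hΦ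
  have hΦpos : ∀ x, 0 < Φ x := fun x => pow_pos (hLpos _ (Real.exp_pos x)) n
  have hΦSV : ∀ a : ℝ, Tendsto (fun x => Φ (x + a) / Φ x) atTop (𝓝 1) := by
    intro a
    have h := ((hSV (Real.exp a) (Real.exp_pos a)).comp Real.tendsto_exp_atTop).pow n
    rw [one_pow] at h
    refine h.congr fun x => ?_
    simp only [Function.comp, hΦ, div_pow]
    rw [Real.exp_add, mul_comm]
  obtain ⟨X, C, hC0, hC, hstep⟩ := karamata_bound Φ hΦpos hΦSV hβ
  set Ψ : ℝ → ℝ := fun x => Φ x * Real.exp (β * x) with hΨ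
  have hΨpos : ∀ x, 0 < Ψ x := fun x => mul_pos (hΦpos x) (Real.exp_pos _)
  set x₀ := Real.log u₀ with hx₀
  obtain ⟨c, hc0, hc⟩ : ∃ c : ℝ, 0 < c ∧ ∀ x ≥ x₀, c ≤ Ψ x := by
    obtain ⟨b, _, hb0, -, hb⟩ := hB (Real.exp '' Set.Icc (min x₀ X) (X + 1))
      (by rintro _ ⟨x, -, rfl⟩; exact Real.exp_pos x)
      (isCompact_Icc.image Real.continuous_exp)
    have hloc : ∀ x ∈ Set.Icc (min x₀ X) (X + 1), b ^ n * Real.exp (β * min x₀ X) ≤ Ψ x := by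
      intro x hx
      have h1 := (hb _ ⟨x, hx, rfl⟩).1
      simp only [hΨ, hΦ]
      have h2 := (hLpos _ (Real.exp_pos x)).le
      gcongr
      exact hx.1
    refine ⟨b ^ n * Real.exp (β * min x₀ X), by positivity, fun x hx => ?_⟩
    rcases le_total x X with h | h
    · exact hloc x ⟨(min_le_left _ _).trans hx, by linarith⟩
    · exact lower_bound_of_step Ψ X _ hstep
        (fun y hy => hloc y ⟨(min_le_right _ _).trans hy.1, hy.2⟩) x h
  refine ⟨K * Real.exp X / c + K * C, fun u hu => ?_⟩
  have hu0 : 0 < u := hu₀.trans_le hu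
  set x := Real.log u with hx
  have hux : u = Real.exp x := (Real.exp_log hu0).symm
  have hxx₀ : x₀ ≤ x := Real.log_le_log hu₀ hu
  have hΨu : u ^ β * L u ^ n = Ψ x := by
    simp only [hΨ, hΦ]
    rw [← hux, Real.rpow_def_of_pos hu0, mul_comm, mul_comm β]
  rw [hΨu]
  have hcΨ := hc x hxx₀
  have hmain : ∫⁻ s in Set.Ioc 0 u, ENNReal.ofReal |γ s| ≤
      ENNReal.ofReal (K * Real.exp X + K * C * Ψ x) := by
    have hcov : Set.Ioc 0 u ⊆ Set.Icc 0 (Real.exp X) ∪ Real.exp '' Set.Icc X x := by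
      intro s hs
      rcases le_total s (Real.exp X) with h | h
      · exact Or.inl ⟨hs.1.le, h⟩
      · refine Or.inr ⟨Real.log s, ⟨(Real.le_log_iff_exp_le hs.1).2 h,
          Real.log_le_log hs.1 hs.2⟩, Real.exp_log hs.1⟩
    have h1 : ∫⁻ s in Set.Icc 0 (Real.exp X), ENNReal.ofReal |γ s| ≤
        ENNReal.ofReal (K * Real.exp X) := by
      calc _ ≤ ∫⁻ s in Set.Icc 0 (Real.exp X), ENNReal.ofReal K :=
            lintegral_mono fun s => ENNReal.ofReal_le_ofReal (hγb s)
        _ = _ := by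
            rw [setLIntegral_const, Real.volume_Icc, sub_zero, ENNReal.ofReal_mul hK.le]
    have h2 : ∫⁻ s in Real.exp '' Set.Icc X x, ENNReal.ofReal |γ s| ≤
        ENNReal.ofReal (K * C * Ψ x) := by
      rw [lintegral_image_eq_lintegral_abs_deriv_mul measurableSet_Icc
        (fun t _ => (Real.hasDerivAt_exp t).hasDerivWithinAt) Real.exp_injective.injOn]
      calc _ ≤ ∫⁻ t in Set.Icc X x, ENNReal.ofReal K * ENNReal.ofReal (Ψ t) := by
            refine lintegral_mono fun t => ?_
            rw [← ENNReal.ofReal_mul (abs_nonneg _), ← ENNReal.ofReal_mul hK.le]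
            apply ENNReal.ofReal_le_ofReal
            have h := hγd (Real.exp t) (Real.exp_pos t).ne'
            rw [abs_of_pos (Real.exp_pos t)] at h ⊢
            rw [← Real.exp_mul] at h
            calc Real.exp t * |γ (Real.exp t)|
                ≤ Real.exp t * (K * L (Real.exp t) ^ n * Real.exp (t * -α)) := by gcongr
              _ = K * (Φ t * (Real.exp t * Real.exp (t * -α))) := by simp only [hΦ]; ring
              _ = K * Ψ t := by
                rw [← Real.exp_add]
                simp only [hΨ, hβdef]
                congr 3; ring
        _ = ENNReal.ofReal K * ∫⁻ t in Set.Icc X x, ENNReal.ofReal (Ψ t) :=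
            lintegral_const_mul' _ _ ENNReal.ofReal_ne_top
        _ ≤ ENNReal.ofReal K * ENNReal.ofReal (C * Ψ x) := by
            gcongr
            rcases le_total X x with h | h
            · exact hC x h
            · refine le_trans (le_of_eq ?_) zero_le
              refine setLIntegral_measure_zero _ _ ?_
              rw [Real.volume_Icc, ENNReal.ofReal_eq_zero]; linarith
        _ = _ := by rw [← ENNReal.ofReal_mul hK.le, mul_assoc]
    calc _ ≤ _ := lintegral_mono_set hcov
      _ ≤ _ := lintegral_union_le _ _ _
      _ ≤ _ := add_le_add h1 h2
      _ = _ := by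
        rw [ENNReal.ofReal_add (by positivity)]
        have := (hΨpos x).le
        positivity
  have hint : IntegrableOn (fun s => |γ s|) (Set.Ioc 0 u) := by
    refine Measure.integrableOn_of_bounded (M := K) (by simp) ?_ ?_
    · exact hγm.abs.aestronglyMeasurable
    · exact Eventually.of_forall fun s => by simpa using hγb s
  rw [← ofReal_integral_eq_lintegral_ofReal hint (Eventually.of_forall fun s => abs_nonneg _)]
    at hmain
  have hΨx := (hΨpos x).le
  rw [ENNReal.ofReal_le_ofReal_iff (by positivity)] at hmain
  rw [intervalIntegral.integral_of_le hu0.le]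
  refine hmain.trans ?_
  rw [add_mul, add_le_add_iff_right, div_mul_eq_mul_div, le_div_iff₀ hc0]
  gcongr

/-! ### The double integral -/

lemma inner_integral_le {K : ℝ} (γ : ℝ → ℝ) (hγm : Measurable γ) (hγe : ∀ x, γ (-x) = γ x)
    (hγb : ∀ x, |γ x| ≤ K) {ε : ℝ} (hε : 0 < ε) {y : ℝ} (hy : y ∈ Set.Ioo (0:ℝ) 1) :
    ∫ ξ in Set.Ioo (0:ℝ) 1, |γ ((y - ξ) / ε)| ≤ 2 * ε * ∫ s in (0:ℝ)..(1/ε), |γ s| := by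
  have hint : ∀ a b : ℝ, IntervalIntegrable (fun s => |γ s|) volume a b := by
    intro a b
    rw [intervalIntegrable_iff]
    refine Measure.integrableOn_of_bounded (M := K) (by simp) ?_ ?_
    · exact hγm.abs.aestronglyMeasurable
    · exact Eventually.of_forall fun s => by simpa using hγb s
  have hneg : ∫ s in (-(1/ε))..0, |γ s| = ∫ s in (0:ℝ)..(1/ε), |γ s| := by
    have := intervalIntegral.integral_comp_neg (a := 0) (b := 1/ε) (fun s => |γ s|)
    simp only [hγe, neg_zero] at this
    exact this.symm
  rw [← integral_Ioc_eq_integral_Ioo, ← intervalIntegral.integral_of_le zero_le_one]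
  simp_rw [sub_div]
  rw [intervalIntegral.integral_comp_sub_div (fun s => |γ s|) hε.ne', smul_eq_mul]
  have h1 : ∫ s in (y/ε - 1/ε)..(y/ε - 0/ε), |γ s| ≤ ∫ s in (-(1/ε))..(1/ε), |γ s| := by
    refine intervalIntegral.integral_mono_interval ?_ ?_ ?_
      (Eventually.of_forall fun s => abs_nonneg _) (hint _ _)
    · have : 0 ≤ y / ε := div_nonneg hy.1.le hε.le
      linarith
    · have : 0 < 1 / ε := by positivity
      simp only [zero_div]; linarith
    · rw [zero_div, sub_zero]
      exact div_le_div_of_nonneg_right hy.2.le hε.le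
  rw [← intervalIntegral.integral_add_adjacent_intervals (hint (-(1/ε)) 0) (hint 0 (1/ε)), hneg] at h1
  calc _ ≤ ε * _ := mul_le_mul_of_nonneg_left h1 hε.le
    _ = _ := by ring

/-- Key tightness estimate: the rescaled double integral of `|γ((y−ξ)/ε)|` is bounded
uniformly over `ε ∈ (0, ζ)`. -/
theorem stmt_10 (m : ℕ) (hm : 1 ≤ m) (H₀ : ℝ) (hH₀ : H₀ ∈ Set.Ioo (1 - 1/(2*(m:ℝ))) 1)
    (H : ℝ) (hH : H = 1 + (m:ℝ) * (H₀ - 1))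
    (L : ℝ → ℝ) (hLpos : ∀ x > 0, 0 < L x)
    (hSV : ∀ a > 0, Tendsto (fun u => L (a * u) / L u) atTop (𝓝 1))
    (hB : ∀ K : Set ℝ, K ⊆ Set.Ioi 0 → IsCompact K →
      ∃ c c' : ℝ, 0 < c ∧ c ≤ c' ∧ ∀ u ∈ K, c ≤ L u ∧ L u ≤ c')
    (K : ℝ) (hK : 0 < K)
    (γ : ℝ → ℝ) (hγm : Measurable γ) (hγe : ∀ x, γ (-x) = γ x)
    (hγb : ∀ x, |γ x| ≤ K)
    (hγd : ∀ x : ℝ, x ≠ 0 → |γ x| ≤ K * L |x| ^ (2*m) * |x| ^ (-(2*(1-H))))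
    (ζ : ℝ) (hζ : ζ ∈ Set.Ioo (0:ℝ) 1) :
    ∃ C : ℝ, ∀ ε ∈ Set.Ioo (0:ℝ) ζ,
      (ε ^ (2*(1-H)) * L (1/ε) ^ (2*m))⁻¹ *
        (∫ y in Set.Ioo (0:ℝ) 1, ∫ ξ in Set.Ioo (0:ℝ) 1, |γ ((y - ξ)/ε)|) ≤ C := by
  have hα : 2 * (1 - H) < 1 := by
    have hm0 : (0:ℝ) < m := by exact_mod_cast hm
    have h1 := hH₀.1
    have h2 : (m:ℝ) * (1 / (2 * m)) = 1 / 2 := by field_simp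
    have h3 := mul_lt_mul_of_pos_left h1 hm0
    rw [mul_sub, h2] at h3
    rw [hH]; linarith
  obtain ⟨C, hC⟩ := integral_abs_le L hLpos hSV hB (2 * m) hα hK γ hγm hγb hγd
    (u₀ := 1 / ζ) (one_div_pos.2 hζ.1)
  refine ⟨2 * C, fun ε hε => ?_⟩
  have hε0 : 0 < ε := hε.1
  have hu := hC (1 / ε) (one_div_le_one_div_of_le hε0 hε.2.le)
  have hLu : 0 < L (1 / ε) ^ (2 * m) := pow_pos (hLpos _ (one_div_pos.2 hε0)) _
  have hεα : 0 < ε ^ (2 * (1 - H)) := Real.rpow_pos_of_pos hε0 _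
  have hpow : ε * (1 / ε) ^ (1 - 2 * (1 - H)) = ε ^ (2 * (1 - H)) := by
    rw [one_div, Real.inv_rpow hε0.le, ← Real.rpow_neg hε0.le]
    nth_rewrite 1 [← Real.rpow_one ε]
    rw [← Real.rpow_add hε0]; congr 1; ring
  have hout : ∫ y in Set.Ioo (0:ℝ) 1, ∫ ξ in Set.Ioo (0:ℝ) 1, |γ ((y - ξ)/ε)| ≤
      2 * ε * ∫ s in (0:ℝ)..(1/ε), |γ s| := by
    have h := norm_setIntegral_le_of_norm_le_const (μ := volume) (s := Set.Ioo (0:ℝ) 1)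
      (f := fun y => ∫ ξ in Set.Ioo (0:ℝ) 1, |γ ((y - ξ)/ε)|) (by simp)
      (fun y hy => by
        rw [Real.norm_of_nonneg (integral_nonneg fun _ => abs_nonneg _)]
        exact inner_integral_le γ hγm hγe hγb hε0 hy)
    simpa using (le_abs_self _).trans h
  rw [inv_mul_le_iff₀ (mul_pos hεα hLu)]
  calc _ ≤ _ := hout
    _ ≤ 2 * ε * (C * ((1 / ε) ^ (1 - 2 * (1 - H)) * L (1 / ε) ^ (2 * m))) := by gcongr
    _ = 2 * C * (ε * (1 / ε) ^ (1 - 2 * (1 - H))) * L (1 / ε) ^ (2 * m) := by ring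
    _ = _ := by rw [hpow]; ring
end

section
/- Let m ≥ 1 be an integer, H₀ ∈ (1 − 1/(2m), 1), and set H = 1 + m(H₀−1) ∈ (1/2, 1). Let L : (0,∞) → (0,∞) be slowly varying at infinity and bounded away from 0 and +∞ on every compact subset of (0,∞). Let ρ : (0,∞) → [−1, 1] satisfy ρ(x)/(x^{2H₀−2} L(x)²) → 1 as x → +∞. Then (1/(T^{2H} L(T)^{2m})) · ∫₀^T ∫₀^T ρ(|s−t|)^m ds dt → 1/(H(2H−1)) as T → +∞. -/
open MeasureTheory Filter Topology

/-!
The kernel `r(x) = ρ(|x|)^m` is even, bounded and measurable, and it is regularly varying at infinity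
with index `α = 2H - 2 ∈ (-1, 0)`. By evenness the double integral is `2 ∫₀^T ∫₀^s r(x) dx ds`, and
after rescaling both variables by `T` and dividing by `T² r(T)` it becomes
`2 ∫₀^1 ∫₀^u r(Tw)/r(T) dw du`. The integrand tends to `w^α`, so the limit is
`2/((α+1)(α+2)) = 1/(H(2H-1))`, provided dominated convergence applies.

The domination `|r(Tw)/r(T)| ≤ C w^β` with `β > -1` (`exists_dominating_power`) rests on a Potter bound
(`potter_additive`), itself a consequence of the uniform convergence theorem for slowly varying functions
(`uniform_small_increments`). The latter needs measurability. `L` is not assumed measurable, but the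
argument only involves `r`, which is measurable and regularly varying by the asymptotics of `ρ`.
-/

/-! ### Slowly varying functions in additive form -/

/-- Uniform convergence theorem in additive form: a measurable `h` all of whose increments
`h (y + u) - h y` vanish at infinity has increments vanishing uniformly in `u ∈ [0, 1]`. With
`φ y = ∫₀² min 1 |h (y + v) - h y| dv`, the triangle inequality through the points `y + u + w`,
averaged over `w ∈ [0, 1]`, bounds the truncated increment by `φ (y + u) + φ y`, and `φ → 0` by
dominated convergence. -/
lemma uniform_small_increments (h : ℝ → ℝ) (hm : Measurable h)
    (hlim : ∀ u, Tendsto (fun y => h (y + u) - h y) atTop (𝓝 0)) (ε : ℝ) (hε : 0 < ε) :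
    ∃ Y, ∀ y ≥ Y, ∀ u ∈ Set.Icc (0 : ℝ) 1, |h (y + u) - h y| ≤ ε := by
  set f : ℝ → ℝ → ℝ := fun y v => min 1 |h (y + v) - h y| with hf
  have f_nonneg : ∀ y v, 0 ≤ f y v := fun y v => le_min zero_le_one (abs_nonneg _)
  have f_meas : ∀ y, Measurable (f y) := fun y => by simp only [hf]; fun_prop
  have f_bound : ∀ y v, ‖f y v‖ ≤ 1 := fun y v => by
    rw [Real.norm_eq_abs, abs_of_nonneg (f_nonneg y v)]; exact min_le_left _ _
  have f_int : ∀ y a b, IntervalIntegrable (f y) volume a b := fun y a b =>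
    (intervalIntegrable_const (c := (1 : ℝ))).mono_fun (f_meas y).aestronglyMeasurable
      (Eventually.of_forall fun v => by simpa using f_bound y v)
  have hφ : Tendsto (fun y => ∫ v in (0 : ℝ)..2, f y v) atTop (𝓝 0) := by
    have := intervalIntegral.tendsto_integral_filter_of_dominated_convergence
      (μ := volume) (a := 0) (b := 2) (l := atTop) (F := f) (f := fun _ => (0 : ℝ)) (fun _ => 1)
      (Eventually.of_forall fun y => (f_meas y).aestronglyMeasurable)
      (Eventually.of_forall fun y => Eventually.of_forall fun v _ => f_bound y v)
      intervalIntegrable_const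
      (Eventually.of_forall fun v _ => by
        have := (tendsto_const_nhds (x := (1 : ℝ))).min (hlim v).abs
        simpa [hf] using this)
    simpa using this
  have hδ : 0 < min 1 ε / 2 := by positivity
  obtain ⟨Y, hY⟩ := eventually_atTop.1 (hφ.eventually (gt_mem_nhds hδ))
  refine ⟨Y, fun y hy u hu => ?_⟩
  have key : ∀ w, min 1 |h (y + u) - h y| ≤ f (y + u) w + f y (w + u) := fun w => by
    have h3 : |h (y + u) - h y| ≤ |h (y + u + w) - h (y + u)| + |h (y + (w + u)) - h y| := by
      rw [show y + (w + u) = y + u + w by ring]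
      have := abs_sub_le (h (y + u)) (h (y + u + w)) (h y)
      rwa [abs_sub_comm (h (y + u)) (h (y + u + w))] at this
    have h4 := abs_nonneg (h (y + u + w) - h (y + u))
    have h5 := abs_nonneg (h (y + (w + u)) - h y)
    simp only [hf]
    rcases min_cases 1 |h (y + u + w) - h (y + u)| with ⟨h1, _⟩ | ⟨h1, _⟩ <;>
    rcases min_cases 1 |h (y + (w + u)) - h y| with ⟨h2, _⟩ | ⟨h2, _⟩ <;> rw [h1, h2] <;>
    first
    | exact (min_le_right _ _).trans h3
    | exact (min_le_left _ _).trans (by linarith)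
  have hint : min 1 |h (y + u) - h y| ≤
      (∫ w in (0 : ℝ)..1, f (y + u) w) + ∫ w in (0 : ℝ)..1, f y (w + u) := by
    have i2 : IntervalIntegrable (fun w => f y (w + u)) volume 0 1 := by
      simpa using (f_int y (0 + u) (1 + u)).comp_add_right u
    rw [← intervalIntegral.integral_add (f_int _ _ _) i2]
    have := intervalIntegral.integral_mono_on (μ := volume) (a := 0) (b := 1) zero_le_one
      (intervalIntegrable_const (c := min 1 |h (y + u) - h y|)) ((f_int (y + u) 0 1).add i2)
      (fun w _ => key w)
    simpa using this
  have hA : (∫ w in (0 : ℝ)..1, f (y + u) w) ≤ ∫ w in (0 : ℝ)..2, f (y + u) w :=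
    intervalIntegral.integral_mono_interval le_rfl zero_le_one one_le_two
      (Eventually.of_forall (f_nonneg _)) (f_int _ _ _)
  have hB : (∫ w in (0 : ℝ)..1, f y (w + u)) ≤ ∫ w in (0 : ℝ)..2, f y w := by
    rw [intervalIntegral.integral_comp_add_right (fun w => f y w)]
    exact intervalIntegral.integral_mono_interval (by linarith [hu.1]) (by linarith)
      (by linarith [hu.2]) (Eventually.of_forall (f_nonneg _)) (f_int _ _ _)
  have h1 := hY y hy
  have h2 := hY (y + u) (by linarith [hu.1])
  have h3 : min 1 |h (y + u) - h y| < min 1 ε := by linarith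
  by_contra! hc
  exact absurd h3 (not_lt.2 (min_le_min_left 1 hc.le))

/-- Potter bound in additive form, obtained by chaining increments of length at most one. -/
lemma potter_additive (h : ℝ → ℝ) (hm : Measurable h)
    (hlim : ∀ u, Tendsto (fun y => h (y + u) - h y) atTop (𝓝 0)) (ε : ℝ) (hε : 0 < ε) :
    ∃ Y, ∀ y ≥ Y, ∀ u ≥ 0, |h (y + u) - h y| ≤ ε * (u + 1) := by
  obtain ⟨Y, hY⟩ := uniform_small_increments h hm hlim ε hε
  refine ⟨Y, ?_⟩
  have step : ∀ n : ℕ, ∀ y ≥ Y, |h (y + n) - h y| ≤ ε * n := by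
    intro n
    induction n with
    | zero => intro y _; simp
    | succ n ih =>
      intro y hy
      have h1 := ih y hy
      have h2 := hY (y + n) (by linarith [Nat.cast_nonneg (α := ℝ) n]) 1 ⟨zero_le_one, le_rfl⟩
      push_cast
      rw [← add_assoc]
      have := abs_sub_le (h (y + n + 1)) (h (y + n)) (h y)
      linarith
  intro y hy u hu
  have h1 := step ⌊u⌋₊ y hy
  have hfl := Nat.floor_le hu
  have h2 := hY (y + ⌊u⌋₊) (by linarith [Nat.cast_nonneg (α := ℝ) ⌊u⌋₊]) (u - ⌊u⌋₊)
    ⟨by linarith, by linarith [Nat.lt_floor_add_one u]⟩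
  rw [show y + ⌊u⌋₊ + (u - ⌊u⌋₊) = y + u by ring] at h2
  have := abs_sub_le (h (y + u)) (h (y + ⌊u⌋₊)) (h y)
  nlinarith

/-! ### Integrals of regularly varying kernels -/

/-- Potter domination on `(0, 1]`: for a bounded, measurable, eventually positive function of regular
variation with index `α ∈ (-1, 0)`, the rescalings `r (T u) / r T` are dominated by an integrable power of `u`. -/
lemma exists_dominating_power (r : ℝ → ℝ) (hr : Measurable r) (M : ℝ) (hM : ∀ x, |r x| ≤ M)
    (α : ℝ) (hα : -1 < α) (hα0 : α < 0) (hpos : ∀ᶠ x in atTop, 0 < r x)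
    (hRV : ∀ a > 0, Tendsto (fun x => r (a * x) / r x) atTop (𝓝 (a ^ α))) :
    ∃ β C : ℝ, -1 < β ∧ ∀ᶠ T in atTop, ∀ u ∈ Set.Ioc (0 : ℝ) 1,
      |r (T * u) / r T| ≤ C * u ^ β := by
  set ε := (α + 1) / 2 with hε
  have hε0 : 0 < ε := by rw [hε]; linarith
  set h : ℝ → ℝ := fun y => Real.log (r (Real.exp y)) - α * y with hh
  have hlim : ∀ u, Tendsto (fun y => h (y + u) - h y) atTop (𝓝 0) := by
    intro u
    have h1 := ((hRV _ (Real.exp_pos u)).comp Real.tendsto_exp_atTop).log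
      (Real.rpow_pos_of_pos (Real.exp_pos u) α).ne'
    rw [Real.log_rpow (Real.exp_pos u), Real.log_exp] at h1
    have h2 := h1.sub_const (α * u)
    rw [sub_self] at h2
    refine h2.congr' ?_
    have p1 := Real.tendsto_exp_atTop.eventually hpos
    have p2 := (Real.tendsto_exp_atTop.comp (tendsto_atTop_add_const_right _ u tendsto_id)).eventually
      hpos
    filter_upwards [p1, p2] with y h3 h4
    simp only [Function.comp, id] at h4 ⊢
    simp only [hh]
    rw [mul_comm, ← Real.exp_add, Real.log_div h4.ne' h3.ne']
    ring
  obtain ⟨Y, hY⟩ := potter_additive h (by simp only [hh]; fun_prop) hlim ε hε0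
  obtain ⟨X0, hX0⟩ := eventually_atTop.1 hpos
  set X := max X0 (Real.exp Y) with hX
  have hXpos : 0 < X := (Real.exp_pos Y).trans_le (le_max_right _ _)
  have hrpos : ∀ x ≥ X, 0 < r x := fun x hx => hX0 x ((le_max_left _ _).trans hx)
  have hβ : α - ε < 0 := by linarith
  have potter : ∀ x ≥ X, ∀ T ≥ x, r x / r T ≤ Real.exp ε * (x / T) ^ (α - ε) := by
    intro x hx T hT
    have hx0 : 0 < x := hXpos.trans_le hx
    have hT0 : 0 < T := hx0.trans_le hT
    have hrx := hrpos x hx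
    have hrT := hrpos T (hx.trans hT)
    have hYx : Y ≤ Real.log x := by
      rw [Real.le_log_iff_exp_le hx0]; exact (le_max_right _ _).trans hx
    have h1 := hY _ hYx (Real.log T - Real.log x) (sub_nonneg.2 (Real.log_le_log hx0 hT))
    have h2 := (abs_le.1 h1).1
    simp only [hh] at h2
    rw [show Real.log x + (Real.log T - Real.log x) = Real.log T by ring, Real.exp_log hT0,
      Real.exp_log hx0] at h2
    rw [Real.rpow_def_of_pos (div_pos hx0 hT0), ← Real.exp_add, ← Real.log_le_iff_le_exp
      (div_pos hrx hrT), Real.log_div hrx.ne' hrT.ne', Real.log_div hx0.ne' hT0.ne']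
    linarith
  have hrX := hrpos X le_rfl
  have hM0 : 0 ≤ M := (abs_nonneg _).trans (hM 0)
  refine ⟨α - ε, (1 + M / r X) * Real.exp ε, by linarith, ?_⟩
  filter_upwards [eventually_ge_atTop X] with T hT u hu
  have hT0 : 0 < T := hXpos.trans_le hT
  have hrT := hrpos T hT
  have hup := Real.rpow_pos_of_pos hu.1 (α - ε)
  have hdiv : 0 ≤ M / r X := by positivity
  rw [abs_div, abs_of_pos hrT]
  rcases le_or_gt X (T * u) with hc | hc
  · have h1 := potter (T * u) hc T (by nlinarith [hu.2])
    rw [abs_of_pos (hrpos _ hc)]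
    rw [mul_div_cancel_left₀ _ hT0.ne'] at h1
    have : 0 ≤ M / r X * (Real.exp ε * u ^ (α - ε)) := by positivity
    linarith
  · -- Below `X` the Potter bound is applied at `X` itself, and `r` is only known to be bounded.
    have h1 := potter X le_rfl T hT
    have h2 : (X / T) ^ (α - ε) ≤ u ^ (α - ε) :=
      Real.rpow_le_rpow_of_nonpos hu.1 (by rw [le_div_iff₀ hT0]; linarith) hβ.le
    calc |r (T * u)| / r T ≤ M / r T := by gcongr; exact hM _
      _ = M / r X * (r X / r T) := by field_simp
      _ ≤ M / r X * (Real.exp ε * u ^ (α - ε)) := by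
        gcongr
        exact h1.trans (by gcongr)
      _ ≤ (1 + M / r X) * Real.exp ε * u ^ (α - ε) := by
        have : 0 ≤ Real.exp ε * u ^ (α - ε) := by positivity
        linarith

/-- Evenness of `r` and rescaling of both variables reduce the double integral to the unit triangle. -/
lemma double_integral_eq (r : ℝ → ℝ) (hr : ∀ a b, IntervalIntegrable r volume a b)
    (heven : ∀ x, r (-x) = r x) (T : ℝ) (hT : 0 < T) :
    ∫ s in Set.Ioo (0 : ℝ) T, ∫ t in Set.Ioo (0 : ℝ) T, r (s - t)
      = 2 * T ^ 2 * ∫ u in (0 : ℝ)..1, ∫ w in (0 : ℝ)..u, r (T * w) := by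
  set R : ℝ → ℝ := fun x => ∫ y in (0 : ℝ)..x, r y with hR
  have hRc : Continuous R := intervalIntegral.continuous_primitive hr 0
  have inner : ∀ s, ∫ t in Set.Ioo (0 : ℝ) T, r (s - t) = R s + R (T - s) := by
    intro s
    rw [← integral_Ioc_eq_integral_Ioo, ← intervalIntegral.integral_of_le hT.le,
      intervalIntegral.integral_comp_sub_left, sub_zero,
      ← intervalIntegral.integral_add_adjacent_intervals (hr (s - T) 0) (hr 0 s), add_comm]
    congr 1
    have := intervalIntegral.integral_comp_neg (a := 0) (b := T - s) r
    simp only [heven, neg_zero, neg_sub] at this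
    exact this.symm
  simp_rw [inner]
  rw [← integral_Ioc_eq_integral_Ioo, ← intervalIntegral.integral_of_le hT.le,
    intervalIntegral.integral_add (hRc.intervalIntegrable _ _)
      (Continuous.intervalIntegrable (u := fun s => R (T - s)) (by fun_prop) _ _),
    intervalIntegral.integral_comp_sub_left (fun x => R x)]
  have h1 : ∀ u, (∫ w in (0 : ℝ)..u, r (T * w)) = T⁻¹ * R (T * u) := by
    intro u
    rw [intervalIntegral.integral_comp_mul_left _ hT.ne']
    simp [hR]
  simp_rw [h1]
  rw [intervalIntegral.integral_const_mul, intervalIntegral.integral_comp_mul_left _ hT.ne']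
  simp only [sub_self, sub_zero, mul_zero, mul_one, smul_eq_mul]
  field_simp
  ring

/-- Karamata-type asymptotics of the double integral of a bounded, even, measurable, eventually
positive kernel of regular variation with index `α ∈ (-1, 0)`. -/
lemma tendsto_double_integral (r : ℝ → ℝ) (hr : Measurable r) (M : ℝ) (hM : ∀ x, |r x| ≤ M)
    (heven : ∀ x, r (-x) = r x)
    (α : ℝ) (hα : -1 < α) (hα0 : α < 0) (hpos : ∀ᶠ x in atTop, 0 < r x)
    (hRV : ∀ a > 0, Tendsto (fun x => r (a * x) / r x) atTop (𝓝 (a ^ α))) :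
    Tendsto (fun T => (∫ s in Set.Ioo (0 : ℝ) T, ∫ t in Set.Ioo (0 : ℝ) T, r (s - t))
      / (T ^ 2 * r T)) atTop (𝓝 (2 / ((α + 1) * (α + 2)))) := by
  obtain ⟨β, C, hβ, hdom⟩ := exists_dominating_power r hr M hM α hα hα0 hpos hRV
  have bdd_int : ∀ g : ℝ → ℝ, Measurable g → (∃ K, ∀ x, |g x| ≤ K) →
      ∀ a b, IntervalIntegrable g volume a b := by
    rintro g hg ⟨K, hK⟩ a b
    exact (intervalIntegrable_const (c := K)).mono_fun hg.aestronglyMeasurable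
      (Eventually.of_forall fun v => (hK v).trans (le_abs_self K))
  have hint : ∀ T a b, IntervalIntegrable (fun w => r (T * w) / r T) volume a b := fun T =>
    bdd_int _ (by fun_prop) ⟨M / |r T|, fun x => by rw [abs_div]; gcongr; exact hM _⟩
  have hpow : ∀ u, IntervalIntegrable (fun w : ℝ => C * w ^ β) volume 0 u := fun u =>
    (intervalIntegral.intervalIntegrable_rpow' hβ).const_mul C
  have hin : ∀ u ∈ Set.Ioc (0 : ℝ) 1, Tendsto (fun T => ∫ w in (0 : ℝ)..u, r (T * w) / r T) atTop
      (𝓝 (u ^ (α + 1) / (α + 1))) := by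
    intro u hu
    have hval : ∫ w in (0 : ℝ)..u, w ^ α = u ^ (α + 1) / (α + 1) := by
      rw [integral_rpow (Or.inl hα), Real.zero_rpow (by linarith), sub_zero]
    rw [← hval]
    refine intervalIntegral.tendsto_integral_filter_of_dominated_convergence
      (fun w => C * w ^ β) (Eventually.of_forall fun T => ?_) ?_ (hpow u) ?_
    · exact Measurable.aestronglyMeasurable (by fun_prop)
    · filter_upwards [hdom] with T hT
      refine Eventually.of_forall fun w hw => ?_
      rw [Set.uIoc_of_le hu.1.le] at hw
      exact hT w ⟨hw.1, hw.2.trans hu.2⟩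
    · refine Eventually.of_forall fun w hw => ?_
      rw [Set.uIoc_of_le hu.1.le] at hw
      simpa only [mul_comm] using hRV w hw.1
  have hout : Tendsto (fun T => ∫ u in (0 : ℝ)..1, ∫ w in (0 : ℝ)..u, r (T * w) / r T) atTop
      (𝓝 (1 / ((α + 1) * (α + 2)))) := by
    have hval : ∫ u in (0 : ℝ)..1, u ^ (α + 1) / (α + 1) = 1 / ((α + 1) * (α + 2)) := by
      rw [intervalIntegral.integral_div, integral_rpow (Or.inl (by linarith)),
        Real.zero_rpow (by linarith), Real.one_rpow, sub_zero,
        show α + 1 + 1 = α + 2 by ring, div_div, mul_comm (α + 2)]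
    rw [← hval]
    refine intervalIntegral.tendsto_integral_filter_of_dominated_convergence
      (fun _ => ∫ w in (0 : ℝ)..1, C * w ^ β) (Eventually.of_forall fun T => ?_) ?_
      intervalIntegrable_const ?_
    · exact (intervalIntegral.continuous_primitive (hint T) 0).aestronglyMeasurable
    · filter_upwards [hdom] with T hT
      refine Eventually.of_forall fun u hu => ?_
      rw [Set.uIoc_of_le zero_le_one] at hu
      have hnn : 0 ≤ᵐ[volume.restrict (Set.Ioc (0 : ℝ) 1)] fun w => C * w ^ β :=
        (ae_restrict_iff' measurableSet_Ioc).2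
          (Eventually.of_forall fun w hw => (abs_nonneg _).trans (hT w hw))
      refine (intervalIntegral.norm_integral_le_of_norm_le hu.1.le
        (Eventually.of_forall fun w hw => hT w ⟨hw.1, hw.2.trans hu.2⟩) (hpow u)).trans ?_
      exact intervalIntegral.integral_mono_interval le_rfl hu.1.le hu.2 hnn (hpow 1)
    · refine Eventually.of_forall fun u hu => ?_
      rw [Set.uIoc_of_le zero_le_one] at hu
      exact hin u hu
  have h2 := hout.const_mul 2
  rw [mul_one_div] at h2
  refine h2.congr' ?_
  filter_upwards [hpos, eventually_gt_atTop 0] with T hrT hT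
  rw [double_integral_eq r (bdd_int r hr ⟨M, hM⟩) heven T hT]
  simp_rw [intervalIntegral.integral_div]
  field_simp

/-! ### Normalization of the variance -/

/-- Normalization of the variance: if `ρ(x) ∼ x^{2H₀−2} L(x)²`, then
`T^{−2H} L(T)^{−2m} ∫₀^T∫₀^T ρ(|s−t|)^m ds dt → 1/(H(2H−1))` as `T → ∞`,
where `H = 1 + m(H₀−1)`. -/
theorem stmt_14 (m : ℕ) (hm : 1 ≤ m) (H₀ : ℝ) (hH₀ : H₀ ∈ Set.Ioo (1 - 1/(2*(m:ℝ))) 1)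
    (H : ℝ) (hH : H = 1 + (m:ℝ) * (H₀ - 1))
    (L : ℝ → ℝ) (hLpos : ∀ x > 0, 0 < L x)
    (hSV : ∀ a > 0, Tendsto (fun u => L (a * u) / L u) atTop (𝓝 1))
    (hB : ∀ K : Set ℝ, K ⊆ Set.Ioi 0 → IsCompact K →
      ∃ c c' : ℝ, 0 < c ∧ c ≤ c' ∧ ∀ u ∈ K, c ≤ L u ∧ L u ≤ c')
    (ρ : ℝ → ℝ) (hρm : Measurable ρ) (hρr : ∀ x > 0, ρ x ∈ Set.Icc (-1:ℝ) 1)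
    (hρ : Tendsto (fun x => ρ x / (x ^ (2*H₀ - 2) * L x ^ 2)) atTop (𝓝 1)) :
    Tendsto (fun T => (1 / (T ^ (2*H) * L T ^ (2*m))) *
        ∫ s in Set.Ioo (0:ℝ) T, ∫ t in Set.Ioo (0:ℝ) T, ρ |s - t| ^ m)
      atTop (𝓝 (1 / (H * (2*H - 1)))) := by
  have hm0 : (0 : ℝ) < m := by exact_mod_cast hm
  obtain ⟨hl, hu⟩ := hH₀
  have hH1 : H < 1 := by rw [hH]; nlinarith
  have hH2 : 1 / 2 < H := by
    have h1 : (m : ℝ) * (1 / (2 * m)) = 1 / 2 := by field_simp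
    rw [hH]; nlinarith
  obtain ⟨q, hq⟩ : ∃ q : ℝ → ℝ, q = fun x => ρ x / (x ^ (2 * H₀ - 2) * L x ^ 2) := ⟨_, rfl⟩
  rw [← hq] at hρ
  -- Taking `|x|` makes the kernel even and bounded on the whole line, including at `0`.
  set r : ℝ → ℝ := fun x => ρ |x| ^ m with hr
  have hr_eq : ∀ x > 0, r x = q x ^ m * (x ^ (2 * H - 2) * L x ^ (2 * m)) := by
    intro x hx
    have h1 : x ^ (2 * H - 2) = (x ^ (2 * H₀ - 2)) ^ m := by
      rw [← Real.rpow_natCast, ← Real.rpow_mul hx.le]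
      congr 1
      rw [hH]; ring
    have hL := hLpos x hx
    have hx' := Real.rpow_pos_of_pos hx (2 * H₀ - 2)
    rw [h1, pow_mul, ← mul_pow, ← mul_pow]
    simp only [hr, hq, abs_of_pos hx]
    congr 1
    field_simp
  have hqpos : ∀ᶠ x in atTop, 0 < q x := hρ.eventually (lt_mem_nhds one_pos)
  have hrpos : ∀ᶠ x in atTop, 0 < r x := by
    filter_upwards [hqpos, eventually_gt_atTop 0] with x h1 h2
    have hL := hLpos x h2
    rw [hr_eq x h2]
    positivity
  have hRV : ∀ a > 0, Tendsto (fun x => r (a * x) / r x) atTop (𝓝 (a ^ (2 * H - 2))) := by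
    intro a ha
    have hqa := hρ.comp (tendsto_id.const_mul_atTop ha)
    have h1 := (((hqa.div hρ one_ne_zero).pow m).mul ((hSV a ha).pow (2 * m))).mul_const
      (a ^ (2 * H - 2))
    simp only [div_one, one_pow, one_mul] at h1
    refine h1.congr' ?_
    filter_upwards [hqpos, eventually_gt_atTop 0] with x h2 h3
    have hL := hLpos x h3
    have hx' := Real.rpow_pos_of_pos h3 (2 * H - 2)
    rw [hr_eq x h3, hr_eq _ (mul_pos ha h3), Real.mul_rpow ha.le h3.le]
    simp only [Function.comp, Pi.div_apply, id]
    change (q (a * x) / q x) ^ m * _ * _ = _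
    rw [div_pow, div_pow]
    field_simp
  have hM : ∀ x, |r x| ≤ max 1 (|ρ 0| ^ m) := by
    intro x
    simp only [hr, abs_pow]
    rcases eq_or_ne x 0 with rfl | hx
    · simp
    · exact (pow_le_one₀ (abs_nonneg _) (abs_le.2 (hρr _ (abs_pos.2 hx)))).trans (le_max_left _ _)
  have main := tendsto_double_integral r (by simp only [hr]; fun_prop) _ hM
    (fun x => by simp only [hr, abs_neg]) (2 * H - 2) (by linarith) (by linarith) hrpos hRV
  have h1 := main.mul (hρ.pow m)
  have hlim : 2 / ((2 * H - 2 + 1) * (2 * H - 2 + 2)) * 1 ^ m = 1 / (H * (2 * H - 1)) := by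
    have h2 : 2 * H - 1 ≠ 0 := by linarith
    have h3 : H ≠ 0 := by linarith
    rw [one_pow, mul_one, show 2 * H - 2 + 1 = 2 * H - 1 by ring, show 2 * H - 2 + 2 = 2 * H by ring]
    field_simp
  rw [hlim] at h1
  refine h1.congr' ?_
  filter_upwards [hqpos, eventually_gt_atTop 0] with T h2 h3
  have hL := hLpos T h3
  have hT2 : T ^ (2 * H) = T ^ 2 * T ^ (2 * H - 2) := by
    rw [← Real.rpow_natCast, ← Real.rpow_add h3]
    congr 1
    push_cast; ring
  have hx' := Real.rpow_pos_of_pos h3 (2 * H - 2)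
  rw [hr_eq T h3, hT2]
  change _ * q T ^ m = _
  field_simp
  rfl
end
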